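/- In the setting of stopping rules for a finite-state discrete-time Markov chain [see context], let K^c : {0,…,N} → ℝ and F ∈ ℝ, and define the reward g : {0,…,N} → ℝ by g(n) := K^c(n) for n < N and g(N) := min(F, K^c(N)). Define V : {0,…,N} × {1,…,m} → ℝ backward by V(N, x) := min(F, K^c(N)) and V(n, x) := min( K^c(n), ∑_{y=1}^{m} (P_{n+1})_{x,y} · γ_y · V(n+1, y) ) for 0 ≤ n < N. Then V(0, j) is the least element of the set { Val(τ) : τ an adapted stopping rule }: V(0, j) ≤ Val(τ) for every adapted stopping rule τ, and there exists an adapted stopping rule τ* with Val(τ*) = V(0, j). -/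

import Mathlib

open Matrix

/-- The path `(w_0, w_1, …, w_N)` started at `j` determined by the choices `(w_1, …, w_N)`. -/
def seqFrom {m N : ℕ} (j : Fin m) (w : Fin N → Fin m) : Fin (N + 1) → Fin m :=
  Fin.cases j w

/-- Probability weight `wt(w) = ∏_{n=1}^N (P_n)_{w_{n−1} w_n}` of the path started at `j`
with choices `w` (the `n`-th step, 0-indexed `n-1`, uses `P (n-1)`). -/
noncomputable def pathWt {m N : ℕ} (j : Fin m) (P : ℕ → Matrix (Fin m) (Fin m) ℝ)
    (w : Fin N → Fin m) : ℝ :=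
  ∏ n : Fin N, P n.val (seqFrom j w n.castSucc) (seqFrom j w n.succ)

/-- A stopping rule `τ` (valued in `{0,…,N}`) is adapted: whether `τ ≤ n` only depends on
the path up to time `n`. -/
def AdaptedRule {m N : ℕ} (τ : (Fin N → Fin m) → ℕ) : Prop :=
  (∀ w, τ w ≤ N) ∧
    ∀ n : ℕ, ∀ w w' : Fin N → Fin m,
      (∀ i : Fin N, (i : ℕ) < n → w i = w' i) → (τ w ≤ n ↔ τ w' ≤ n)

/-- Discounted expected reward `Val(τ) = ∑_w wt(w) (∏_{i=1}^{τ(w)} γ_{w_i}) g(τ(w))`. -/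
noncomputable def ruleValue {m N : ℕ} (j : Fin m) (P : ℕ → Matrix (Fin m) (Fin m) ℝ)
    (γ : Fin m → ℝ) (g : ℕ → ℝ) (τ : (Fin N → Fin m) → ℕ) : ℝ :=
  ∑ w : Fin N → Fin m,
    pathWt j P w * (∏ i : Fin N, if (i : ℕ) < τ w then γ (w i) else 1) * g (τ w)

/-- Backward recursion for the callable bond: `snellCall q x = V(N − q, x)`, i.e.
`V(N, x) = min(F, K^c(N))` and
`V(n, x) = min(K^c(n), ∑_y (P_{n+1})_{x,y} γ_y V(n+1, y))` for `n < N`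
(0-indexed, the matrix used in the step from time `n` is `P n`). -/
noncomputable def snellCall {m : ℕ} (N : ℕ) (P : ℕ → Matrix (Fin m) (Fin m) ℝ)
    (γ : Fin m → ℝ) (Kc : ℕ → ℝ) (F : ℝ) : ℕ → Fin m → ℝ
  | 0, _ => min F (Kc N)
  | q + 1, x =>
      min (Kc (N - (q + 1)))
        (∑ y : Fin m, P (N - (q + 1)) x y * γ y * snellCall N P γ Kc F q y)

theorem seqFrom_succ_eq {m N : ℕ} (j : Fin m) (w : Fin N → Fin m) (i : Fin N) :
    seqFrom j w i.succ = w i := rfl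

theorem pathWt_cons {m N : ℕ} (j y : Fin m) (P : ℕ → Matrix (Fin m) (Fin m) ℝ)
    (w : Fin N → Fin m) :
    pathWt j P (Fin.cons y w : Fin (N + 1) → Fin m)
      = P 0 j y * pathWt y (fun n => P (n + 1)) w := by
  unfold pathWt
  rw [Fin.prod_univ_succ]
  congr 1

theorem sum_cons_eq {m N : ℕ} (f : (Fin (N + 1) → Fin m) → ℝ) :
    ∑ w, f w = ∑ y : Fin m, ∑ w : Fin N → Fin m, f (Fin.cons y w) := by
  rw [← (Fin.consEquiv (fun _ : Fin (N + 1) => Fin m)).sum_comp, Fintype.sum_prod_type]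
  rfl

theorem sum_pathWt {m : ℕ} (N : ℕ) : ∀ (j : Fin m) (P : ℕ → Matrix (Fin m) (Fin m) ℝ),
    (∀ n < N, ∀ x : Fin m, ∑ y : Fin m, P n x y = 1) →
    ∑ w : Fin N → Fin m, pathWt j P w = 1 := by
  induction N with
  | zero => intro j P _; simp [pathWt]
  | succ N ih =>
    intro j P h
    rw [sum_cons_eq]
    simp_rw [pathWt_cons, ← Finset.mul_sum]
    have h1 : ∀ y : Fin m, ∑ w : Fin N → Fin m, pathWt y (fun n => P (n + 1)) w = 1 :=
      fun y => ih y _ (fun n hn => h (n + 1) (by omega))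
    simp_rw [h1, mul_one]
    exact h 0 (by omega) j

theorem snellCall_shift {m : ℕ} (N : ℕ) (P : ℕ → Matrix (Fin m) (Fin m) ℝ)
    (γ : Fin m → ℝ) (Kc : ℕ → ℝ) (F : ℝ) (q : ℕ) : q ≤ N → ∀ x : Fin m,
    snellCall (N + 1) P γ Kc F q x
      = snellCall N (fun n => P (n + 1)) γ (fun n => Kc (n + 1)) F q x := by
  induction q with
  | zero => intro _ x; rfl
  | succ q ih =>
    intro hq x
    have e : N + 1 - (q + 1) = N - (q + 1) + 1 := by omega
    simp only [snellCall]
    rw [e]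
    simp_rw [ih (by omega)]

/-- Value of a rule that never stops at time `0`, decomposed along the first step. -/
theorem ruleValue_succ {m N : ℕ} (j : Fin m) (P : ℕ → Matrix (Fin m) (Fin m) ℝ)
    (γ : Fin m → ℝ) (g : ℕ → ℝ) (τ : (Fin (N + 1) → Fin m) → ℕ)
    (σ : Fin m → (Fin N → Fin m) → ℕ) (h : ∀ y w, τ (Fin.cons y w) = σ y w + 1) :
    ruleValue j P γ g τ = ∑ y : Fin m, P 0 j y * γ y *
      ruleValue y (fun n => P (n + 1)) γ (fun n => g (n + 1)) (σ y) := by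
  unfold ruleValue
  rw [sum_cons_eq]
  apply Finset.sum_congr rfl
  intro y _
  rw [Finset.mul_sum]
  apply Finset.sum_congr rfl
  intro w _
  rw [pathWt_cons, h, Fin.prod_univ_succ]
  simp only [Fin.cons_zero, Fin.cons_succ, Fin.val_zero, Fin.val_succ, Nat.add_lt_add_iff_right,
    Nat.succ_pos, if_true]
  ring

theorem ruleValue_zero {m N : ℕ} (j : Fin m) (P : ℕ → Matrix (Fin m) (Fin m) ℝ)
    (hProw : ∀ n < N, ∀ x : Fin m, ∑ y : Fin m, P n x y = 1)
    (γ : Fin m → ℝ) (g : ℕ → ℝ) (τ : (Fin N → Fin m) → ℕ) (h : ∀ w, τ w = 0) :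
    ruleValue j P γ g τ = g 0 := by
  unfold ruleValue
  simp only [h, Nat.not_lt_zero, if_false, Finset.prod_const_one, mul_one]
  rw [← Finset.sum_mul, sum_pathWt N j P hProw, one_mul]

theorem optimal_stopping_aux (m : ℕ) (γ : Fin m → ℝ) (hγ : ∀ i, 0 ≤ γ i) (F : ℝ) (N : ℕ) :
    ∀ (j : Fin m) (P : ℕ → Matrix (Fin m) (Fin m) ℝ)
    (_ : ∀ n < N, ∀ x y : Fin m, 0 ≤ P n x y)
    (_ : ∀ n < N, ∀ x : Fin m, ∑ y : Fin m, P n x y = 1)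
    (Kc : ℕ → ℝ)
    (g : ℕ → ℝ) (_ : ∀ n, g n = if n < N then Kc n else min F (Kc N)),
    (∀ τ : (Fin N → Fin m) → ℕ, AdaptedRule τ →
        snellCall N P γ Kc F N j ≤ ruleValue j P γ g τ) ∧
      (∃ τ : (Fin N → Fin m) → ℕ, AdaptedRule τ ∧
        ruleValue j P γ g τ = snellCall N P γ Kc F N j) := by
  induction N with
  | zero =>
    intro j P _ hrow Kc g hg
    have hg0 : g 0 = min F (Kc 0) := by simp [hg]
    constructor
    · intro τ hτ
      rw [ruleValue_zero j P hrow γ g τ (fun w => Nat.le_zero.mp (hτ.1 w)), hg0]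
      rfl
    · refine ⟨fun _ => 0, ⟨fun _ => le_rfl, fun _ _ _ _ => Iff.rfl⟩, ?_⟩
      rw [ruleValue_zero j P hrow γ g _ (fun _ => rfl), hg0]
      rfl
  | succ N ih =>
    intro j P hnn hrow Kc g hg
    have IH := fun y : Fin m => ih y (fun n => P (n + 1))
      (fun n hn => hnn (n + 1) (by omega)) (fun n hn => hrow (n + 1) (by omega))
      (fun n => Kc (n + 1)) (fun n => g (n + 1)) (fun n => by simp [hg])
    have hg0 : g 0 = Kc 0 := by simp [hg]
    have hV : snellCall (N + 1) P γ Kc F (N + 1) j = min (Kc 0) (∑ y : Fin m, P 0 j y * γ y *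
        snellCall N (fun n => P (n + 1)) γ (fun n => Kc (n + 1)) F N y) := by
      simp only [snellCall, Nat.sub_self]
      simp_rw [snellCall_shift N P γ Kc F N le_rfl]
    rw [hV]
    constructor
    · intro τ hτ
      by_cases h0 : ∃ w, τ w = 0
      · obtain ⟨w0, hw0⟩ := h0
        have hz : ∀ w, τ w = 0 := fun w => Nat.le_zero.mp
          ((hτ.2 0 w0 w (fun i hi => absurd hi (Nat.not_lt_zero _))).mp hw0.le)
        rw [ruleValue_zero j P hrow γ g τ hz, hg0]
        exact min_le_left _ _
      · push Not at h0
        rw [ruleValue_succ j P γ g τ (fun y w => τ (Fin.cons y w) - 1)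
          (fun y w => by have := h0 (Fin.cons y w); omega)]
        refine (min_le_right _ _).trans (Finset.sum_le_sum fun y _ => ?_)
        refine mul_le_mul_of_nonneg_left ((IH y).1 _ ⟨?_, ?_⟩)
          (mul_nonneg (hnn 0 (by omega) j y) (hγ y))
        · intro w
          have := hτ.1 (Fin.cons y w)
          show τ (Fin.cons y w) - 1 ≤ N; omega
        · intro n w w' hw
          have := hτ.2 (n + 1) (Fin.cons y w) (Fin.cons y w') (by
            intro i
            refine Fin.cases ?_ ?_ i
            · intro _; rfl
            · intro i hi
              simpa using hw i (by simpa using hi))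
          simpa [Nat.sub_le_iff_le_add] using this
    · rcases le_total (Kc 0) (∑ y : Fin m, P 0 j y * γ y *
        snellCall N (fun n => P (n + 1)) γ (fun n => Kc (n + 1)) F N y) with hle | hle
      · refine ⟨fun _ => 0, ⟨fun _ => Nat.zero_le _, fun _ _ _ _ => Iff.rfl⟩, ?_⟩
        rw [ruleValue_zero j P hrow γ g _ (fun _ => rfl), hg0, min_eq_left hle]
      · choose σ hσ hσv using fun y => (IH y).2
        refine ⟨fun w => σ (w 0) (Fin.tail w) + 1, ⟨?_, ?_⟩, ?_⟩
        · intro w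
          have := (hσ (w 0)).1 (Fin.tail w)
          simpa using this
        · intro n w w' hw
          cases n with
          | zero => simp
          | succ n =>
            have h0 : w 0 = w' 0 := hw 0 (by simp)
            simp only [Nat.add_le_add_iff_right]
            rw [h0]
            exact (hσ (w' 0)).2 n _ _ (fun i hi => hw i.succ (by simpa using hi))
        · rw [ruleValue_succ j P γ g _ σ (fun y w => by simp), min_eq_right hle]
          simp_rw [hσv]

/-- **Proposition 4, callable bond (discrete optimal stopping).**
With reward `g(n) = K^c(n)` for `n < N` and `g(N) = min(F, K^c(N))`, the value `V(0, j)`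
of the backward recursion is the least element of `{Val(τ) : τ adapted stopping rule}`:
every adapted rule has value `≥ V(0, j)`, and some adapted rule attains it. -/
theorem callable_bond_optimal_stopping (m N : ℕ) (hm : 1 ≤ m) (hN : 1 ≤ N) (j : Fin m)
    (P : ℕ → Matrix (Fin m) (Fin m) ℝ)
    (hPnn : ∀ n < N, ∀ x y : Fin m, 0 ≤ P n x y)
    (hProw : ∀ n < N, ∀ x : Fin m, ∑ y : Fin m, P n x y = 1)
    (γ : Fin m → ℝ) (hγ : ∀ i, 0 ≤ γ i)
    (Kc : ℕ → ℝ) (F : ℝ)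
    (g : ℕ → ℝ) (hg : ∀ n, g n = if n < N then Kc n else min F (Kc N)) :
    (∀ τ : (Fin N → Fin m) → ℕ, AdaptedRule τ →
        snellCall N P γ Kc F N j ≤ ruleValue j P γ g τ) ∧
      (∃ τ : (Fin N → Fin m) → ℕ, AdaptedRule τ ∧
        ruleValue j P γ g τ = snellCall N P γ Kc F N j) := by
  exact optimal_stopping_aux m γ hγ F N j P hPnn hProw Kc g hg
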